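/- There exist an integer p ≥ 2, an integer n ≥ 1, a map Γ : ℝ≥0 → ℝ^{p×p} such that Γ_t is an interconnection for every t, and a map Q : ℝ≥0 → Q̄_n, such that the time-varying linear system ẋ(t) = (Γ_t ⊗ Q_t) x(t) has an unbounded solution. -/

import Mathlib

open Matrix MeasureTheory Filter
open scoped Kronecker

noncomputable section

/-- Euclidean norm of a vector. -/
def eunorm {ι : Type*} [Fintype ι] (v : ι → ℝ) : ℝ := Real.sqrt (∑ i, v i ^ 2)

/-- Spectral (induced 2-) norm of a matrix. -/
def specNorm {m n : Type*} [Fintype m] [Fintype n] (M : Matrix m n ℝ) : ℝ :=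
  sSup {c : ℝ | ∃ v : n → ℝ, eunorm v ≤ 1 ∧ c = eunorm (M.mulVec v)}

/-- Smallest singular value of a matrix. -/
def sigmaMin {m n : Type*} [Fintype m] [Fintype n] (M : Matrix m n ℝ) : ℝ :=
  sInf {c : ℝ | ∃ v : n → ℝ, eunorm v = 1 ∧ c = eunorm (M.mulVec v)}

/-- Largest singular value of a matrix. -/
def sigmaMax {m n : Type*} [Fintype m] [Fintype n] (M : Matrix m n ℝ) : ℝ :=
  sSup {c : ℝ | ∃ v : n → ℝ, eunorm v = 1 ∧ c = eunorm (M.mulVec v)}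

/-- A continuous-time interconnection matrix. -/
def IsInterconnection {p : ℕ} (Γ : Matrix (Fin p) (Fin p) ℝ) : Prop :=
  (∀ i j, i ≠ j → 0 ≤ Γ i j) ∧
  ∀ i, Γ i i = -∑ j ∈ Finset.univ.filter (fun j => j ≠ i), Γ i j

/-- Connectedness of the graph of a matrix. -/
def ConnectedMat {p : ℕ} (Γ : Matrix (Fin p) (Fin p) ℝ) : Prop :=
  ∃ v : Fin p, ∀ u : Fin p, Relation.ReflTransGen (fun i j => 0 < Γ i j) u v

/-- Membership in `Q̄_n`: symmetric positive semidefinite with spectral norm at most 1. -/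
def InQbar {n : ℕ} (R : Matrix (Fin n) (Fin n) ℝ) : Prop :=
  R.PosSemidef ∧ specNorm R ≤ 1

/-- `δ(ε, T) = min{ε/2, ε³/(240 T⁵)}`. -/
def deltaCT (ε T : ℝ) : ℝ := min (ε / 2) (ε ^ 3 / (240 * T ^ 5))

/-- Sufficient excitation for `Q : ℝ≥0 → Q_n`. -/
def SuffExcitingCT {n : ℕ} (Q : ℝ → Matrix (Fin n) (Fin n) ℝ) : Prop :=
  ∃ ε T : ℕ → ℝ, (∀ i, 0 < ε i) ∧ (∀ i, 0 < T i) ∧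
    (∀ i, ε i ≤ sigmaMin (Matrix.of fun a b =>
      ∫ t in (∑ j ∈ Finset.range i, T j)..((∑ j ∈ Finset.range i, T j) + T i), Q t a b)) ∧
    Tendsto (fun N => ∑ i ∈ Finset.range N, deltaCT (ε i) (T i)) atTop atTop

/-- Persistence of excitation for `Q : ℝ≥0 → Q_n`. -/
def PersExcitingCT {n : ℕ} (Q : ℝ → Matrix (Fin n) (Fin n) ℝ) : Prop :=
  ∃ ε T : ℝ, 0 < ε ∧ 0 < T ∧ ∀ t : ℝ, 0 ≤ t →
    ε ≤ sigmaMin (Matrix.of fun a b => ∫ s in t..(t + T), Q s a b)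

/-!
Two nodes in the plane are coupled through the projection onto a line turning at unit speed. In the
turning frame `(u, v)`, let the difference of the nodes be `e⁻ᵗ u + (1 + e⁻ᵗ) v`. Its derivative is
`-(1 + 2e⁻ᵗ) u`, so it solves the equation of the difference for the total rate `eᵗ + 2`: the
coupling sees only the component `e⁻ᵗ` along `u`, and a rate of order `eᵗ` makes up for its decay.
The difference shrinks towards length `1` but turns forever, so the nodes keep moving. How the rate
is split between the two nodes is still free; giving the first one the rate `eᵗ (1 - cos t) / 2`
makes it move with velocity `-(1 - cos t) / 2 • u`, whose first coordinate has positive mean.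
-/

section Norms

variable {ι m n : Type*} [Fintype ι] [Fintype m] [Fintype n]

theorem eunorm_eq_norm_toLp (v : ι → ℝ) : eunorm v = ‖WithLp.toLp 2 v‖ := by
  simp only [eunorm, EuclideanSpace.norm_eq, Real.norm_eq_abs, sq_abs]

theorem eunorm_nonneg (v : ι → ℝ) : 0 ≤ eunorm v := Real.sqrt_nonneg _

theorem eunorm_zero : eunorm (0 : ι → ℝ) = 0 := by
  rw [eunorm_eq_norm_toLp, WithLp.toLp_zero, norm_zero]

theorem eunorm_smul (c : ℝ) (v : ι → ℝ) : eunorm (c • v) = |c| * eunorm v := by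
  rw [eunorm_eq_norm_toLp, eunorm_eq_norm_toLp, WithLp.toLp_smul, norm_smul, Real.norm_eq_abs]

theorem abs_apply_le_eunorm (v : ι → ℝ) (i : ι) : |v i| ≤ eunorm v := by
  rw [eunorm_eq_norm_toLp]
  exact PiLp.norm_apply_le (WithLp.toLp 2 v) i

theorem abs_dotProduct_le_eunorm_mul_eunorm (v w : ι → ℝ) : |v ⬝ᵥ w| ≤ eunorm v * eunorm w := by
  rw [eunorm_eq_norm_toLp, eunorm_eq_norm_toLp, mul_comm]
  exact abs_real_inner_le_norm (WithLp.toLp 2 w) (WithLp.toLp 2 v)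

theorem specNorm_le {M : Matrix m n ℝ} {C : ℝ}
    (h : ∀ v, eunorm v ≤ 1 → eunorm (M *ᵥ v) ≤ C) : specNorm M ≤ C := by
  refine csSup_le ⟨_, 0, eunorm_zero.trans_le zero_le_one, rfl⟩ ?_
  rintro _ ⟨v, hv, rfl⟩
  exact h v hv

theorem vecMulVec_mulVec_eq_dotProduct_smul {l : Type*} (u : l → ℝ) (w v : n → ℝ) :
    vecMulVec u w *ᵥ v = (w ⬝ᵥ v) • u := by
  rw [vecMulVec_mulVec, op_smul_eq_smul]

theorem specNorm_vecMulVec_le (u : m → ℝ) (w : n → ℝ) :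
    specNorm (vecMulVec u w) ≤ eunorm w * eunorm u := by
  refine specNorm_le fun v hv => ?_
  calc eunorm (vecMulVec u w *ᵥ v)
      = |w ⬝ᵥ v| * eunorm u := by rw [vecMulVec_mulVec_eq_dotProduct_smul, eunorm_smul]
    _ ≤ eunorm w * eunorm v * eunorm u :=
      mul_le_mul_of_nonneg_right (abs_dotProduct_le_eunorm_mul_eunorm w v) (eunorm_nonneg u)
    _ ≤ eunorm w * eunorm u :=
      mul_le_mul_of_nonneg_right (mul_le_of_le_one_right (eunorm_nonneg w) hv) (eunorm_nonneg u)

theorem inQbar_vecMulVec_self {n : ℕ} {u : Fin n → ℝ} (hu : eunorm u ≤ 1) :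
    InQbar (vecMulVec u u) :=
  ⟨by simpa only [star_trivial] using posSemidef_vecMulVec_self_star u,
    (specNorm_vecMulVec_le u u).trans (mul_le_one₀ hu (eunorm_nonneg u) hu)⟩

end Norms

section TwoNodes

/-- The interconnection of two nodes in which node `0` is attracted to node `1` at rate `a`, and
node `1` to node `0` at rate `b`. -/
def twoNode (a b : ℝ) : Matrix (Fin 2) (Fin 2) ℝ := !![-a, a; b, -b]

theorem isInterconnection_twoNode {a b : ℝ} (ha : 0 ≤ a) (hb : 0 ≤ b) :
    IsInterconnection (twoNode a b) := by
  constructor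
  · intro i j hij
    fin_cases i <;> fin_cases j <;> simp_all [twoNode]
  · intro i
    fin_cases i <;> simp [twoNode, Finset.sum_filter]

/-- The joint state of two nodes with states `y` and `w`, indexed as the Kronecker product
requires. -/
def joinStates {ι : Type*} (y w : ι → ℝ) : Fin 2 × ι → ℝ := fun i => ![y, w] i.1 i.2

theorem hasDerivAt_joinStates {ι : Type*} {y w : ℝ → ι → ℝ} {y' w' : ι → ℝ} {t : ℝ}
    (hy : HasDerivAt y y' t) (hw : HasDerivAt w w' t) :
    HasDerivAt (fun s => joinStates (y s) (w s)) (joinStates y' w') t := by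
  rw [hasDerivAt_pi] at hy hw ⊢
  rintro ⟨k, j⟩
  fin_cases k
  exacts [hy j, hw j]

variable {ι : Type*} [Fintype ι]

theorem kronecker_mulVec_joinStates (A : Matrix (Fin 2) (Fin 2) ℝ) (Q : Matrix ι ι ℝ)
    (y w : ι → ℝ) :
    (A ⊗ₖ Q) *ᵥ joinStates y w =
      joinStates (A 0 0 • Q *ᵥ y + A 0 1 • Q *ᵥ w) (A 1 0 • Q *ᵥ y + A 1 1 • Q *ᵥ w) := by
  ext ⟨k, j⟩
  fin_cases k <;>
    simp [joinStates, mulVec, dotProduct, Fintype.sum_prod_type, Finset.mul_sum, mul_assoc]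

theorem twoNode_kronecker_mulVec_joinStates (a b : ℝ) (Q : Matrix ι ι ℝ) (y w : ι → ℝ) :
    (twoNode a b ⊗ₖ Q) *ᵥ joinStates y w =
      joinStates (-(a • Q *ᵥ (y - w))) (b • Q *ᵥ (y - w)) := by
  rw [kronecker_mulVec_joinStates, mulVec_sub]
  congr 1 <;> simp only [twoNode, of_apply, cons_val_zero, cons_val_one] <;> module

theorem hasDerivAt_joinStates_of_sub {a b t : ℝ} {Q : Matrix ι ι ℝ} {y z : ℝ → ι → ℝ}
    (hy : HasDerivAt y (-(a • Q *ᵥ z t)) t) (hz : HasDerivAt z (-((a + b) • Q *ᵥ z t)) t) :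
    HasDerivAt (fun s => joinStates (y s) (y s - z s))
      ((twoNode a b ⊗ₖ Q) *ᵥ joinStates (y t) (y t - z t)) t := by
  rw [twoNode_kronecker_mulVec_joinStates, sub_sub_cancel]
  have hw : HasDerivAt (fun s => y s - z s) (b • Q *ᵥ z t) t :=
    (hy.sub hz).congr_deriv (by module)
  exact hasDerivAt_joinStates hy hw

end TwoNodes

section TurningFrame

/-- The unit vector of angle `t`, spanning the line onto which the excitation `Q t` projects. -/
def direction (t : ℝ) : Fin 2 → ℝ := ![Real.cos t, Real.sin t]

/-- The unit vector of angle `t + π / 2`, which `direction t` completes to an orthonormal frame. -/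
def normal (t : ℝ) : Fin 2 → ℝ := ![-Real.sin t, Real.cos t]

theorem direction_dotProduct_self (t : ℝ) : direction t ⬝ᵥ direction t = 1 := by
  simp [direction, dotProduct, ← sq]

theorem direction_dotProduct_normal (t : ℝ) : direction t ⬝ᵥ normal t = 0 := by
  simp [direction, normal, dotProduct, mul_comm]

theorem eunorm_direction (t : ℝ) : eunorm (direction t) = 1 := by
  simp [eunorm, direction]

theorem hasDerivAt_direction (t : ℝ) : HasDerivAt direction (normal t) t := by
  rw [hasDerivAt_pi, Fin.forall_fin_two]
  exact ⟨Real.hasDerivAt_cos t, Real.hasDerivAt_sin t⟩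

theorem hasDerivAt_normal (t : ℝ) : HasDerivAt normal (-direction t) t := by
  rw [hasDerivAt_pi, Fin.forall_fin_two]
  exact ⟨(Real.hasDerivAt_sin t).neg, Real.hasDerivAt_cos t⟩

theorem hasDerivAt_smul_direction_add_smul_normal {α β : ℝ → ℝ} {α' β' t : ℝ}
    (hα : HasDerivAt α α' t) (hβ : HasDerivAt β β' t) :
    HasDerivAt (fun s => α s • direction s + β s • normal s)
      ((α' - β t) • direction t + (α t + β') • normal t) t :=
  ((hα.smul (hasDerivAt_direction t)).add (hβ.smul (hasDerivAt_normal t))).congr_deriv (by module)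

end TurningFrame

section Trajectory

/-- The difference of the two nodes. -/
def gap (t : ℝ) : Fin 2 → ℝ :=
  Real.exp (-t) • direction t + (1 + Real.exp (-t)) • normal t

/-- The trajectory of node `0`, a primitive of `-(1 - cos t) / 2 • direction t`. -/
def drift (t : ℝ) : Fin 2 → ℝ :=
  ![(t + Real.sin t * Real.cos t) / 4 - Real.sin t / 2, Real.cos t / 2 + Real.sin t ^ 2 / 4]

/-- The rate at which node `0` is attracted to node `1`. -/
def driftRate (t : ℝ) : ℝ := Real.exp t * ((1 - Real.cos t) / 2)

/-- The rate at which node `1` is attracted to node `0`, chosen so that the two rates add up to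
`eᵗ + 2`. -/
def returnRate (t : ℝ) : ℝ := Real.exp t * ((1 + Real.cos t) / 2) + 2

theorem driftRate_nonneg (t : ℝ) : 0 ≤ driftRate t :=
  mul_nonneg (Real.exp_pos t).le (by linarith [Real.cos_le_one t])

theorem returnRate_nonneg (t : ℝ) : 0 ≤ returnRate t :=
  add_nonneg (mul_nonneg (Real.exp_pos t).le (by linarith [Real.neg_one_le_cos t])) zero_le_two

theorem driftRate_add_returnRate (t : ℝ) : driftRate t + returnRate t = Real.exp t + 2 := by
  rw [driftRate, returnRate]
  ring

theorem exp_mul_exp_neg (t : ℝ) : Real.exp t * Real.exp (-t) = 1 := by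
  rw [← Real.exp_add, add_neg_cancel, Real.exp_zero]

theorem direction_dotProduct_gap (t : ℝ) : direction t ⬝ᵥ gap t = Real.exp (-t) := by
  rw [gap, dotProduct_add, dotProduct_smul, dotProduct_smul, direction_dotProduct_self,
    direction_dotProduct_normal, smul_zero, add_zero, smul_eq_mul, mul_one]

theorem vecMulVec_direction_mulVec_gap (t : ℝ) :
    vecMulVec (direction t) (direction t) *ᵥ gap t = Real.exp (-t) • direction t := by
  rw [vecMulVec_mulVec_eq_dotProduct_smul, direction_dotProduct_gap]

theorem hasDerivAt_gap (t : ℝ) :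
    HasDerivAt gap (-((driftRate t + returnRate t) •
      vecMulVec (direction t) (direction t) *ᵥ gap t)) t := by
  have hexp : HasDerivAt (fun s => Real.exp (-s)) (-Real.exp (-t)) t := by
    simpa using (hasDerivAt_neg t).exp
  refine (hasDerivAt_smul_direction_add_smul_normal hexp (hexp.const_add 1)).congr_deriv ?_
  have hspeed : (Real.exp t + 2) * Real.exp (-t) = 1 + 2 * Real.exp (-t) := by
    rw [add_mul, exp_mul_exp_neg]
  rw [vecMulVec_direction_mulVec_gap, driftRate_add_returnRate, smul_smul, hspeed]
  module

theorem hasDerivAt_drift_zero (t : ℝ) :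
    HasDerivAt (fun s => drift s 0) (-((1 - Real.cos t) / 2 * Real.cos t)) t := by
  have h := (((hasDerivAt_id t).add
    ((Real.hasDerivAt_sin t).mul (Real.hasDerivAt_cos t))).div_const 4).sub
      ((Real.hasDerivAt_sin t).div_const 2)
  refine h.congr_deriv ?_
  linear_combination -(1 / 4) * Real.sin_sq_add_cos_sq t

theorem hasDerivAt_drift_one (t : ℝ) :
    HasDerivAt (fun s => drift s 1) (-((1 - Real.cos t) / 2 * Real.sin t)) t := by
  have h := ((Real.hasDerivAt_cos t).div_const 2).add
    (((Real.hasDerivAt_sin t).pow 2).div_const 4)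
  refine h.congr_deriv ?_
  ring

theorem hasDerivAt_drift (t : ℝ) :
    HasDerivAt drift (-(driftRate t • vecMulVec (direction t) (direction t) *ᵥ gap t)) t := by
  have hspeed : driftRate t * Real.exp (-t) = (1 - Real.cos t) / 2 := by
    rw [driftRate, mul_right_comm, exp_mul_exp_neg, one_mul]
  rw [vecMulVec_direction_mulVec_gap, smul_smul, hspeed, hasDerivAt_pi, Fin.forall_fin_two]
  exact ⟨hasDerivAt_drift_zero t, hasDerivAt_drift_one t⟩

theorem tendsto_drift_zero_atTop : Tendsto (fun t => drift t 0) atTop atTop := by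
  have hlower (t : ℝ) : t / 4 - 1 ≤ drift t 0 := by
    have hprod : -1 ≤ Real.sin t * Real.cos t := by
      nlinarith [sq_nonneg (Real.sin t + Real.cos t), Real.sin_sq_add_cos_sq t]
    simp only [drift, cons_val_zero]
    linarith [Real.sin_le_one t]
  refine tendsto_atTop_mono hlower ?_
  exact tendsto_atTop_add_const_right _ _ (tendsto_id.atTop_div_const four_pos)

end Trajectory

theorem stmt8 :
    ∃ (p n : ℕ), 2 ≤ p ∧ 1 ≤ n ∧
      ∃ (Γ : ℝ → Matrix (Fin p) (Fin p) ℝ) (Q : ℝ → Matrix (Fin n) (Fin n) ℝ)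
        (x : ℝ → (Fin p × Fin n) → ℝ),
        (∀ t : ℝ, 0 ≤ t → IsInterconnection (Γ t)) ∧
        (∀ t : ℝ, 0 ≤ t → InQbar (Q t)) ∧
        (∀ t : ℝ, 0 ≤ t → ∀ i, HasDerivAt (fun s => x s i) (((Γ t ⊗ₖ Q t).mulVec (x t)) i) t) ∧
        (∀ M : ℝ, ∃ t : ℝ, 0 ≤ t ∧ M ≤ eunorm (x t)) := by
  refine ⟨2, 2, le_rfl, one_le_two, fun t => twoNode (driftRate t) (returnRate t),
    fun t => vecMulVec (direction t) (direction t),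
    fun t => joinStates (drift t) (drift t - gap t), ?_, ?_, ?_, ?_⟩
  · exact fun t _ => isInterconnection_twoNode (driftRate_nonneg t) (returnRate_nonneg t)
  · exact fun t _ => inQbar_vecMulVec_self (eunorm_direction t).le
  · exact fun t _ =>
      hasDerivAt_pi.mp (hasDerivAt_joinStates_of_sub (hasDerivAt_drift t) (hasDerivAt_gap t))
  · intro M
    obtain ⟨t, hM, ht⟩ :=
      ((tendsto_drift_zero_atTop.eventually_ge_atTop M).and (eventually_ge_atTop 0)).exists
    refine ⟨t, ht, hM.trans ((le_abs_self _).trans ?_)⟩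
    exact abs_apply_le_eunorm (joinStates (drift t) (drift t - gap t)) (0, 0)
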